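/- Let H be a Hopf algebra over K and (V, μ) an algebra in the category of left H-Yetter-Drinfeld modules. Then the map P_R : V # H → V # H defined by P_R(v # h) = ε(h) (v # 1_H) is an idempotent Rota-Baxter operator of weight -1 on the smash product algebra V # H. -/

import Mathlib

/-!
STATEMENT 12: For an algebra `(V, μ)` in the category of left `H`-Yetter-Drinfeld modules,
the map `P_R(v # h) = ε(h)(v # 1)` is an idempotent Rota-Baxter operator of weight `-1`
on the smash product algebra `V # H`.
-/

open TensorProduct Coalgebra HopfAlgebra LinearMap

/-- The smash product multiplication on `V ⊗ H` associated to a left `H`-action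
`act : H ⊗ V →ₗ V`:  `(v # h)(v' # h') = ∑ v(h₍₁₎·v') # h₍₂₎h'`. -/
noncomputable def smashMul (K : Type*) [Field K]
    (H : Type*) [Ring H] [HopfAlgebra K H]
    (V : Type*) [NonUnitalRing V] [Module K V]
    [SMulCommClass K V V] [IsScalarTower K V V]
    (act : H ⊗[K] V →ₗ[K] V) :
    (V ⊗[K] H) ⊗[K] (V ⊗[K] H) →ₗ[K] V ⊗[K] H :=
  (LinearMap.rTensor H (LinearMap.mul' K V)) ∘ₗ
  (TensorProduct.assoc K V V H).symm.toLinearMap ∘ₗ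
  (LinearMap.lTensor V (TensorProduct.map act (LinearMap.mul' K H))) ∘ₗ
  (LinearMap.lTensor V (TensorProduct.tensorTensorTensorComm K H H V H).toLinearMap) ∘ₗ
  (TensorProduct.assoc K V (H ⊗[K] H) (V ⊗[K] H)).toLinearMap ∘ₗ
  (LinearMap.rTensor (V ⊗[K] H) (LinearMap.lTensor V (Coalgebra.comul (R := K) (A := H))))

/-- The smash product on pure tensors, via a Sweedler representation. -/
theorem smashMul_tmul_repr (K : Type*) [Field K]
    (H : Type*) [Ring H] [HopfAlgebra K H]
    (V : Type*) [NonUnitalRing V] [Module K V]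
    [SMulCommClass K V V] [IsScalarTower K V V]
    (act : H ⊗[K] V →ₗ[K] V) (v w : V) (h g : H) {ι : Type*} (r : Coalgebra.Repr K h ι) :
    smashMul K H V act ((v ⊗ₜ[K] h) ⊗ₜ[K] (w ⊗ₜ[K] g)) =
      ∑ i ∈ r.index, (v * act (r.left i ⊗ₜ[K] w)) ⊗ₜ[K] (r.right i * g) := by
  simp [smashMul, ← r.eq, TensorProduct.sum_tmul, TensorProduct.tmul_sum]

/-- The smash product with trivial left `H`-component. -/
theorem smashMul_tmul_one (K : Type*) [Field K]
    (H : Type*) [Ring H] [HopfAlgebra K H]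
    (V : Type*) [NonUnitalRing V] [Module K V]
    [SMulCommClass K V V] [IsScalarTower K V V]
    (act : H ⊗[K] V →ₗ[K] V) (act_one : ∀ v : V, act ((1 : H) ⊗ₜ[K] v) = v)
    (v w : V) (g : H) :
    smashMul K H V act ((v ⊗ₜ[K] (1 : H)) ⊗ₜ[K] (w ⊗ₜ[K] g)) = (v * w) ⊗ₜ[K] g := by
  simp [smashMul, Algebra.TensorProduct.one_def, act_one]

theorem smashProduct_PR_isRotaBaxter_weight_neg_one
    (K : Type*) [Field K] [CharZero K]
    (H : Type*) [Ring H] [HopfAlgebra K H]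
    (V : Type*) [NonUnitalRing V] [Module K V]
    [SMulCommClass K V V] [IsScalarTower K V V]
    -- left H-module structure on V
    (act : H ⊗[K] V →ₗ[K] V)
    (act_one : ∀ v : V, act ((1 : H) ⊗ₜ[K] v) = v)
    (act_mul : ∀ (h h' : H) (v : V),
      act (h ⊗ₜ[K] act (h' ⊗ₜ[K] v)) = act ((h * h') ⊗ₜ[K] v))
    -- left H-comodule structure on V
    (ρ : V →ₗ[K] H ⊗[K] V)
    (coassoc : ∀ v : V,
      (ρ.lTensor H) (ρ v) =
        (TensorProduct.assoc K H H V)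
          (((Coalgebra.comul (R := K) (A := H)).rTensor V) (ρ v)))
    (counital : ∀ v : V,
      (TensorProduct.lid K V) (((Coalgebra.counit (R := K) (A := H)).rTensor V) (ρ v)) = v)
    -- Yetter-Drinfeld condition:
    -- ∑ h₍₁₎v₍₋₁₎ ⊗ h₍₂₎·v₍₀₎ = ∑ (h₍₁₎·v)₍₋₁₎h₍₂₎ ⊗ (h₍₁₎·v)₍₀₎
    (yd : ∀ (h : H) (v : V),
      (TensorProduct.map (LinearMap.mul' K H) act)
        ((TensorProduct.tensorTensorTensorComm K H H H V)
          (Coalgebra.comul h ⊗ₜ[K] ρ v)) =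
      (TensorProduct.map
          ((LinearMap.mul' K H) ∘ₗ (TensorProduct.comm K H H).toLinearMap) LinearMap.id)
        ((TensorProduct.assoc K H H V).symm
          ((LinearMap.lTensor H (ρ ∘ₗ act))
            ((TensorProduct.assoc K H H V)
              ((LinearMap.rTensor V (TensorProduct.comm K H H).toLinearMap)
                (Coalgebra.comul h ⊗ₜ[K] v))))))
    -- module-algebra condition: h·(vv') = ∑ (h₍₁₎·v)(h₍₂₎·v')
    (act_alg : ∀ (h : H) (v v' : V),
      act (h ⊗ₜ[K] (v * v')) =
        (LinearMap.mul' K V)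
          ((TensorProduct.map act act)
            ((TensorProduct.tensorTensorTensorComm K H H V V)
              (Coalgebra.comul h ⊗ₜ[K] (v ⊗ₜ[K] v')))))
    -- comodule-algebra condition: ρ(vv') = ∑ v₍₋₁₎v'₍₋₁₎ ⊗ v₍₀₎v'₍₀₎
    (coact_alg : ∀ v v' : V,
      ρ (v * v') =
        (TensorProduct.map (LinearMap.mul' K H) (LinearMap.mul' K V))
          ((TensorProduct.tensorTensorTensorComm K H V H V) (ρ v ⊗ₜ[K] ρ v')))
    :
    -- P_R(v # h) = ε(h)(v # 1)
    let PR : V ⊗[K] H →ₗ[K] V ⊗[K] H :=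
      LinearMap.lTensor V
        ((Algebra.linearMap K H) ∘ₗ (Coalgebra.counit (R := K) (A := H)))
    (PR ∘ₗ PR = PR) ∧
    (∀ x y : V ⊗[K] H,
      smashMul K H V act (PR x ⊗ₜ[K] PR y) =
        PR (smashMul K H V act (x ⊗ₜ[K] PR y)) +
        PR (smashMul K H V act (PR x ⊗ₜ[K] y)) +
        (-1 : K) • PR (smashMul K H V act (x ⊗ₜ[K] y))) := by
  intro PR
  have hPR : ∀ (v : V) (h : H),
      PR (v ⊗ₜ[K] h) = (Coalgebra.counit (R := K) h) • (v ⊗ₜ[K] (1 : H)) := by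
    intro v h
    simp [PR, Algebra.algebraMap_eq_smul_one]
  have h1 : ∀ x y : V ⊗[K] H,
      PR (smashMul K H V act (x ⊗ₜ[K] PR y)) = PR (smashMul K H V act (x ⊗ₜ[K] y)) := by
    intro x y
    induction x with
    | zero => simp
    | add a b ha hb => simp only [TensorProduct.add_tmul, map_add, ha, hb]
    | tmul v h =>
      induction y with
      | zero => simp
      | add a b ha hb => simp only [TensorProduct.tmul_add, map_add, ha, hb]
      | tmul w g =>
        have r := Coalgebra.Repr.arbitrary K h
        rw [hPR, TensorProduct.tmul_smul, map_smul, map_smul,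
          smashMul_tmul_repr K H V act v w h _ r, smashMul_tmul_repr K H V act v w h _ r]
        simp only [map_sum, hPR, Finset.smul_sum, Bialgebra.counit_mul, smul_smul, mul_one]
        exact Finset.sum_congr rfl fun i _ => by rw [mul_comm]
  have h2 : ∀ x y : V ⊗[K] H,
      smashMul K H V act (PR x ⊗ₜ[K] PR y) = PR (smashMul K H V act (PR x ⊗ₜ[K] y)) := by
    intro x y
    induction x with
    | zero => simp
    | add a b ha hb => simp only [TensorProduct.add_tmul, map_add, ha, hb]
    | tmul v h =>
      induction y with
      | zero => simp
      | add a b ha hb => simp only [TensorProduct.tmul_add, map_add, ha, hb]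
      | tmul w g =>
        simp only [hPR, TensorProduct.tmul_smul, ← TensorProduct.smul_tmul', map_smul,
          smashMul_tmul_one K H V act act_one]
        rw [smul_comm]
  refine ⟨?_, fun x y => ?_⟩
  · apply TensorProduct.ext'
    intro v h
    simp [hPR]
  · rw [h1, h2, neg_one_smul]
    abel
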